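/- Let Λ ∈ ℝ^{n×n} be symmetric positive semidefinite, W ∈ ℝ^{n×d}, p > 0, ν ∈ ℝ, and m ∈ ℝ. If 1/2 + |m|·‖Λ‖₂·‖W‖₂ ≤ p·‖W‖_i²·‖Λ‖_i − ν, then p·WᵀΛW − νI is positive definite (hence invertible) and ‖(p·WᵀΛW − νI)^{-1} ((1/2)Iᵀ − mWᵀΛ)‖₂ ≤ 1. -/

import Mathlib

open Matrix BigOperators

/-- Euclidean norm of a vector. -/
noncomputable def vnorm {k : ℕ} (v : Fin k → ℝ) : ℝ := Real.sqrt (v ⬝ᵥ v)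

/-- Spectral norm of a matrix: the largest singular value, i.e. the supremum of ‖Ax‖
over unit vectors x. -/
noncomputable def spNorm {n d : ℕ} (A : Matrix (Fin n) (Fin d) ℝ) : ℝ :=
  sSup {c | ∃ x : Fin d → ℝ, vnorm x = 1 ∧ c = vnorm (A *ᵥ x)}

/-- Infimum norm of a matrix: the smallest singular value (square root of the smallest
eigenvalue of AᵀA), i.e. the infimum of ‖Ax‖ over unit vectors x. -/
noncomputable def infNorm {n d : ℕ} (A : Matrix (Fin n) (Fin d) ℝ) : ℝ :=
  sInf {c | ∃ x : Fin d → ℝ, vnorm x = 1 ∧ c = vnorm (A *ᵥ x)}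

/-- The rectangular identity block. -/
def rectId (n d : ℕ) : Matrix (Fin n) (Fin d) ℝ :=
  Matrix.of fun i j => if (i : ℕ) = (j : ℕ) then 1 else 0

lemma dot_self_nonneg' {k : ℕ} (v : Fin k → ℝ) : 0 ≤ v ⬝ᵥ v :=
  Finset.sum_nonneg fun i _ => mul_self_nonneg _

lemma vnorm_nonneg {k : ℕ} (v : Fin k → ℝ) : 0 ≤ vnorm v := Real.sqrt_nonneg _

lemma vnorm_sq {k : ℕ} (v : Fin k → ℝ) : vnorm v ^ 2 = v ⬝ᵥ v :=
  Real.sq_sqrt (dot_self_nonneg' v)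

lemma vnorm_eq {k : ℕ} (v : Fin k → ℝ) : vnorm v = ‖WithLp.toLp 2 v‖ := by
  rw [EuclideanSpace.norm_eq, vnorm]
  congr 1
  simp [dotProduct, sq]

lemma vnorm_add_le {k : ℕ} (v w : Fin k → ℝ) : vnorm (v + w) ≤ vnorm v + vnorm w := by
  simp only [vnorm_eq, WithLp.toLp_add]
  exact norm_add_le _ _

lemma vnorm_smul {k : ℕ} (c : ℝ) (v : Fin k → ℝ) : vnorm (c • v) = |c| * vnorm v := by
  simp only [vnorm_eq, WithLp.toLp_smul, norm_smul, Real.norm_eq_abs]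

lemma dot_le_vnorm {k : ℕ} (v w : Fin k → ℝ) : v ⬝ᵥ w ≤ vnorm v * vnorm w := by
  have h := real_inner_le_norm (WithLp.toLp 2 v : EuclideanSpace ℝ (Fin k)) (WithLp.toLp 2 w)
  rw [← vnorm_eq, ← vnorm_eq] at h
  simpa [PiLp.inner_apply, dotProduct, mul_comm] using h

lemma eq_zero_of_vnorm {k : ℕ} {v : Fin k → ℝ} (h : vnorm v = 0) : v = 0 := by
  rw [vnorm_eq, norm_eq_zero] at h
  simpa using h

lemma vnorm_normalize {k : ℕ} {v : Fin k → ℝ} (h : vnorm v ≠ 0) :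
    vnorm ((vnorm v)⁻¹ • v) = 1 := by
  rw [vnorm_smul, abs_of_nonneg (inv_nonneg.2 (vnorm_nonneg v)), inv_mul_cancel₀ h]

lemma vnorm_mulVec_normalize {n d : ℕ} (A : Matrix (Fin n) (Fin d) ℝ) (v : Fin d → ℝ) :
    vnorm (A *ᵥ ((vnorm v)⁻¹ • v)) = (vnorm v)⁻¹ * vnorm (A *ᵥ v) := by
  rw [mulVec_smul, vnorm_smul, abs_of_nonneg (inv_nonneg.2 (vnorm_nonneg v))]

lemma spSet_bdd {n d : ℕ} (A : Matrix (Fin n) (Fin d) ℝ) :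
    BddAbove {c | ∃ x : Fin d → ℝ, vnorm x = 1 ∧ c = vnorm (A *ᵥ x)} := by
  refine ⟨Real.sqrt (∑ i, ∑ j, A i j ^ 2), ?_⟩
  rintro c ⟨x, hx, rfl⟩
  apply Real.sqrt_le_sqrt
  apply Finset.sum_le_sum
  intro i _
  have h := Finset.sum_mul_sq_le_sq_mul_sq Finset.univ (A i) x
  have h2 : ∑ j, x j ^ 2 = 1 := by
    have := vnorm_sq x
    rw [hx] at this
    simp only [dotProduct, ← sq] at this
    linarith
  rw [h2, mul_one] at h
  rw [← sq]
  exact h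

lemma spNorm_nonneg {n d : ℕ} (A : Matrix (Fin n) (Fin d) ℝ) : 0 ≤ spNorm A := by
  apply Real.sSup_nonneg
  rintro c ⟨x, hx, rfl⟩
  exact vnorm_nonneg _

lemma infNorm_nonneg {n d : ℕ} (A : Matrix (Fin n) (Fin d) ℝ) : 0 ≤ infNorm A := by
  apply Real.sInf_nonneg
  rintro c ⟨x, hx, rfl⟩
  exact vnorm_nonneg _

lemma vnorm_mulVec_le {n d : ℕ} (A : Matrix (Fin n) (Fin d) ℝ) (x : Fin d → ℝ) :
    vnorm (A *ᵥ x) ≤ spNorm A * vnorm x := by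
  by_cases hx : vnorm x = 0
  · have := eq_zero_of_vnorm hx
    subst this
    simp [vnorm]
  · have h : vnorm (A *ᵥ ((vnorm x)⁻¹ • x)) ≤ spNorm A :=
      le_csSup (spSet_bdd A) ⟨_, vnorm_normalize hx, rfl⟩
    have hpos := lt_of_le_of_ne (vnorm_nonneg x) (Ne.symm hx)
    rw [vnorm_mulVec_normalize, inv_mul_le_iff₀ hpos] at h
    linarith

lemma infNorm_le_unit {n d : ℕ} (A : Matrix (Fin n) (Fin d) ℝ) (x : Fin d → ℝ)
    (hx : vnorm x = 1) : infNorm A ≤ vnorm (A *ᵥ x) := by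
  refine csInf_le ⟨0, ?_⟩ ⟨x, hx, rfl⟩
  rintro c ⟨x, hx, rfl⟩
  exact vnorm_nonneg _

lemma le_vnorm_mulVec {n d : ℕ} (A : Matrix (Fin n) (Fin d) ℝ) (x : Fin d → ℝ) :
    infNorm A * vnorm x ≤ vnorm (A *ᵥ x) := by
  by_cases hx : vnorm x = 0
  · rw [hx, mul_zero]; exact vnorm_nonneg _
  · have h := infNorm_le_unit A _ (vnorm_normalize hx)
    have hpos := lt_of_le_of_ne (vnorm_nonneg x) (Ne.symm hx)
    rw [vnorm_mulVec_normalize, le_inv_mul_iff₀ hpos] at h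
    linarith

lemma vnorm_transpose_le {n d : ℕ} (A : Matrix (Fin n) (Fin d) ℝ) (z : Fin n → ℝ) :
    vnorm (Aᵀ *ᵥ z) ≤ spNorm A * vnorm z := by
  have h1 : vnorm (Aᵀ *ᵥ z) ^ 2 = (A *ᵥ (Aᵀ *ᵥ z)) ⬝ᵥ z := by
    rw [vnorm_sq, dotProduct_comm (A *ᵥ _) z, dotProduct_mulVec z, ← mulVec_transpose]
  have h2 := dot_le_vnorm (A *ᵥ (Aᵀ *ᵥ z)) z
  have h3 := mul_le_mul_of_nonneg_right (vnorm_mulVec_le A (Aᵀ *ᵥ z)) (vnorm_nonneg z)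
  rcases (vnorm_nonneg (Aᵀ *ᵥ z)).eq_or_lt with h0 | h0
  · rw [← h0]; exact mul_nonneg (spNorm_nonneg A) (vnorm_nonneg z)
  · refine le_of_mul_le_mul_left ?_ h0
    nlinarith

lemma vnorm_rectId {n d : ℕ} (y : Fin n → ℝ) : vnorm ((rectId n d)ᵀ *ᵥ y) ≤ vnorm y := by
  set x := (rectId n d)ᵀ *ᵥ y with hx
  have key : x ⬝ᵥ x ≤ (x ⬝ᵥ x + y ⬝ᵥ y) / 2 := by
    have e1 : x ⬝ᵥ x = ∑ j : Fin d, ∑ i : Fin n, x j * (rectId n d i j * y i) := by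
      conv_lhs => rw [dotProduct]
      refine Finset.sum_congr rfl fun j _ => ?_
      rw [← Finset.mul_sum]
      rfl
    have e2 : ∑ j : Fin d, ∑ i : Fin n, x j * (rectId n d i j * y i) ≤
        ∑ j : Fin d, ∑ i : Fin n,
          (rectId n d i j * (x j * x j) / 2 + rectId n d i j * (y i * y i) / 2) := by
      refine Finset.sum_le_sum fun j _ => Finset.sum_le_sum fun i _ => ?_
      simp only [rectId, of_apply]
      split_ifs
      · nlinarith [sq_nonneg (x j - y i)]
      · simp
    have r1 : ∀ j : Fin d, ∑ i : Fin n, rectId n d i j ≤ 1 := by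
      intro j
      simp only [rectId, of_apply, Finset.sum_boole]
      exact_mod_cast Finset.card_le_one.2 (by
        intro a ha b hb
        simp at ha hb
        exact Fin.ext (ha.trans hb.symm))
    have r2 : ∀ i : Fin n, ∑ j : Fin d, rectId n d i j ≤ 1 := by
      intro j
      simp only [rectId, of_apply, Finset.sum_boole]
      exact_mod_cast Finset.card_le_one.2 (by
        intro a ha b hb
        simp at ha hb
        exact Fin.ext (ha.symm.trans hb))
    have e3 : ∑ j : Fin d, ∑ i : Fin n, rectId n d i j * (x j * x j) / 2 ≤ (x ⬝ᵥ x) / 2 := by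
      rw [dotProduct, Finset.sum_div]
      refine Finset.sum_le_sum fun j _ => ?_
      rw [← Finset.sum_div, ← Finset.sum_mul]
      nlinarith [r1 j, mul_self_nonneg (x j)]
    have e4 : ∑ j : Fin d, ∑ i : Fin n, rectId n d i j * (y i * y i) / 2 ≤ (y ⬝ᵥ y) / 2 := by
      rw [Finset.sum_comm, dotProduct, Finset.sum_div]
      refine Finset.sum_le_sum fun j _ => ?_
      rw [← Finset.sum_div, ← Finset.sum_mul]
      nlinarith [r2 j, mul_self_nonneg (y j)]
    simp only [Finset.sum_add_distrib] at e2
    linarith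
  exact Real.sqrt_le_sqrt (by linarith)

lemma infNorm_quad {n : ℕ} (Λ : Matrix (Fin n) (Fin n) ℝ) (hΛ : Λ.PosSemidef) (y : Fin n → ℝ) :
    infNorm Λ * (y ⬝ᵥ y) ≤ y ⬝ᵥ (Λ *ᵥ y) := by
  have hev : ∀ i, infNorm Λ ≤ hΛ.1.eigenvalues i := by
    intro i
    have hu : vnorm (WithLp.ofLp (hΛ.1.eigenvectorBasis i)) = 1 := by
      rw [vnorm_eq]
      exact hΛ.1.eigenvectorBasis.orthonormal.1 i
    have := infNorm_le_unit Λ _ hu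
    rw [hΛ.1.mulVec_eigenvectorBasis i, vnorm_smul, hu,
      abs_of_nonneg (hΛ.eigenvalues_nonneg i), mul_one] at this
    exact this
  set b := hΛ.1.eigenvectorBasis with hb
  set Y : EuclideanSpace ℝ (Fin n) := WithLp.toLp 2 y with hY
  have hin : ∀ u v : EuclideanSpace ℝ (Fin n), inner ℝ u v = WithLp.ofLp u ⬝ᵥ WithLp.ofLp v := by
    intro u v
    simp [PiLp.inner_apply, dotProduct, mul_comm]
  have h1 : y ⬝ᵥ y = ∑ i, inner ℝ Y (b i) * inner ℝ (b i) Y := by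
    rw [b.sum_inner_mul_inner, hin]
  have h2 : y ⬝ᵥ (Λ *ᵥ y) =
      ∑ i, inner ℝ Y (b i) * (hΛ.1.eigenvalues i * inner ℝ (b i) Y) := by
    have : y ⬝ᵥ (Λ *ᵥ y) = inner ℝ Y (WithLp.toLp 2 (Λ *ᵥ y)) := by rw [hin]
    rw [this, ← b.sum_inner_mul_inner]
    refine Finset.sum_congr rfl fun i _ => ?_
    congr 1
    have ht : Λᵀ = Λ := by simpa using hΛ.1.eq
    rw [hin, hin, dotProduct_mulVec, ← mulVec_transpose, ht, hΛ.1.mulVec_eigenvectorBasis i,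
      smul_dotProduct, smul_eq_mul]
  rw [h1, h2, Finset.mul_sum]
  refine Finset.sum_le_sum fun i _ => ?_
  rw [real_inner_comm Y (b i)]
  nlinarith [hev i, mul_self_nonneg (inner ℝ Y (b i))]

/-- If ½ + |m|·‖Λ‖₂·‖W‖₂ ≤ p·‖W‖ᵢ²·‖Λ‖ᵢ − ν for a symmetric positive semidefinite Λ and
p > 0, then p·WᵀΛW − νI is positive definite and ‖(p·WᵀΛW − νI)⁻¹(½Iᵀ − mWᵀΛ)‖₂ ≤ 1. -/
theorem claim4_offdiag_bound
    {n d : ℕ} (Λ : Matrix (Fin n) (Fin n) ℝ) (hΛ : Λ.PosSemidef)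
    (W : Matrix (Fin n) (Fin d) ℝ) (p ν m : ℝ) (hp : 0 < p)
    (h : 1 / 2 + |m| * spNorm Λ * spNorm W ≤ p * infNorm W ^ 2 * infNorm Λ - ν) :
    (p • (Wᵀ * Λ * W) - ν • (1 : Matrix (Fin d) (Fin d) ℝ)).PosDef ∧
      spNorm ((p • (Wᵀ * Λ * W) - ν • (1 : Matrix (Fin d) (Fin d) ℝ))⁻¹ *
        ((1 / 2 : ℝ) • (rectId n d)ᵀ - m • (Wᵀ * Λ))) ≤ 1 := by
  set K := 1 / 2 + |m| * spNorm Λ * spNorm W with hK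
  have hKpos : 0 < K := by
    have := mul_nonneg (mul_nonneg (abs_nonneg m) (spNorm_nonneg Λ)) (spNorm_nonneg W)
    linarith
  set M := p • (Wᵀ * Λ * W) - ν • (1 : Matrix (Fin d) (Fin d) ℝ) with hM
  have hquad : ∀ x : Fin d → ℝ, K * (x ⬝ᵥ x) ≤ x ⬝ᵥ (M *ᵥ x) := by
    intro x
    have e : x ⬝ᵥ (M *ᵥ x) = p * ((W *ᵥ x) ⬝ᵥ (Λ *ᵥ (W *ᵥ x))) - ν * (x ⬝ᵥ x) := by
      rw [hM, sub_mulVec, smul_mulVec, smul_mulVec, one_mulVec, dotProduct_sub,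
        dotProduct_smul, dotProduct_smul, smul_eq_mul, smul_eq_mul, ← mulVec_mulVec,
        ← mulVec_mulVec, dotProduct_mulVec x, vecMul_transpose]
    have h1 := infNorm_quad Λ hΛ (W *ᵥ x)
    have h2 : infNorm W ^ 2 * (x ⬝ᵥ x) ≤ (W *ᵥ x) ⬝ᵥ (W *ᵥ x) := by
      rw [← vnorm_sq, ← vnorm_sq, ← mul_pow]
      exact pow_le_pow_left₀ (mul_nonneg (infNorm_nonneg W) (vnorm_nonneg x))
        (le_vnorm_mulVec W x) 2
    have h3 := mul_le_mul_of_nonneg_left h2 (infNorm_nonneg Λ)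
    have h4 := mul_le_mul_of_nonneg_left (h3.trans h1) hp.le
    have h5 := mul_le_mul_of_nonneg_right h (dot_self_nonneg' x)
    rw [e]
    linarith
  have hsymm : M.IsHermitian := by
    have ht : Λᵀ = Λ := by simpa using hΛ.1.eq
    simp [IsHermitian, hM, transpose_mul, ht, Matrix.mul_assoc]
  have hPD : M.PosDef := by
    refine PosDef.of_dotProduct_mulVec_pos hsymm fun x hx => ?_
    have hx' : 0 < x ⬝ᵥ x := by
      refine lt_of_le_of_ne (dot_self_nonneg' x) fun h0 => hx ?_
      exact dotProduct_self_eq_zero.1 h0.symm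
    simpa using lt_of_lt_of_le (mul_pos hKpos hx') (hquad x)
  refine ⟨hPD, ?_⟩
  refine Real.sSup_le ?_ zero_le_one
  rintro c ⟨y, hy, rfl⟩
  set N := (1 / 2 : ℝ) • (rectId n d)ᵀ - m • (Wᵀ * Λ) with hN
  have hNy : vnorm (N *ᵥ y) ≤ K := by
    have e : N *ᵥ y = (1 / 2 : ℝ) • ((rectId n d)ᵀ *ᵥ y) + (-m) • (Wᵀ *ᵥ (Λ *ᵥ y)) := by
      rw [hN, sub_mulVec, smul_mulVec, smul_mulVec, mulVec_mulVec, neg_smul, sub_eq_add_neg]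
    rw [e]
    refine (vnorm_add_le _ _).trans ?_
    rw [vnorm_smul, vnorm_smul, abs_neg, abs_of_pos (by norm_num : (0 : ℝ) < 1 / 2)]
    have h1 := vnorm_rectId (d := d) y
    have h2 := vnorm_transpose_le W (Λ *ᵥ y)
    have h3 := mul_le_mul_of_nonneg_left (vnorm_mulVec_le Λ y) (spNorm_nonneg W)
    have h4 := mul_le_mul_of_nonneg_left (h2.trans h3) (abs_nonneg m)
    rw [hy] at h1 h4
    linarith
  set x := (M⁻¹ * N) *ᵥ y with hx
  have hMx : M *ᵥ x = N *ᵥ y := by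
    rw [hx, mulVec_mulVec, ← Matrix.mul_assoc,
      Matrix.mul_nonsing_inv M ((isUnit_iff_isUnit_det M).1 hPD.isUnit), Matrix.one_mul]
  have h1 := hquad x
  have h2 := dot_le_vnorm x (M *ᵥ x)
  rw [← vnorm_sq] at h1
  rw [hMx] at h1 h2
  by_contra! hc
  have h3 := mul_le_mul_of_nonneg_left hNy (vnorm_nonneg x)
  have h4 : 0 < K * vnorm x := mul_pos hKpos (by linarith)
  nlinarith
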